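/- Define GR_⧅ := {CP(p) : p ∈ G, CP(p) ∈ MFC is a good pair (a, b) with key(b) < key(a)}. For every point set Y such that X ∪ Y is an arborally satisfied set, |X ∪ Y| ≥ |GR_⧅| + |X|. -/

import Mathlib

open Finset

attribute [local instance] Classical.propDecidable

/-- A point in the plane: first coordinate is the key, second is the time. -/
abbrev Pt : Type := ℤ × ℤ

/-- `r` lies in the closed axis-parallel rectangle with opposite corners `p` and `q`. -/
def inRect (p q r : Pt) : Prop :=
  min p.1 q.1 ≤ r.1 ∧ r.1 ≤ max p.1 q.1 ∧ min p.2 q.2 ≤ r.2 ∧ r.2 ≤ max p.2 q.2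

/-- `r` lies in the open axis-parallel rectangle with opposite corners `p` and `q`. -/
def inOpenRect (p q r : Pt) : Prop :=
  min p.1 q.1 < r.1 ∧ r.1 < max p.1 q.1 ∧ min p.2 q.2 < r.2 ∧ r.2 < max p.2 q.2

/-- `S` is an arborally satisfied set. -/
def ArbSat (S : Finset Pt) : Prop :=
  ∀ p ∈ S, ∀ q ∈ S, p.1 = q.1 ∨ p.2 = q.2 ∨ ∃ r ∈ S, r ≠ p ∧ r ≠ q ∧ inRect p q r

/-- `X` is the permutation point set `{(σ(t), t) : 1 ≤ t ≤ n}` of some permutation `σ` of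
`{1, …, n}`. -/
def IsPermPointSet (n : ℕ) (X : Finset Pt) : Prop :=
  ∃ σ : Equiv.Perm (Fin n),
    X = Finset.univ.image (fun t : Fin n => ((((σ t : ℕ) : ℤ) + 1, ((t : ℕ) : ℤ) + 1) : Pt))

/-- The points added by GREEDY at time `t`, given the point set `X` and the set `G` of points
added before time `t`: for the point `p` of `X` with time `t` and each point `q` of time `< t`
with a different key such that the rectangle spanned by `p` and `q` contains no other point of
time `< t`, the point `(key q, t)` is added. -/
noncomputable def greedyStep (X G : Finset Pt) (t : ℤ) : Finset Pt :=
  (X.filter (fun p => p.2 = t)).biUnion (fun p =>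
    (((X ∪ G).filter (fun s => s.2 < t)).filter (fun q =>
      q.1 ≠ p.1 ∧ ∀ r ∈ (X ∪ G).filter (fun s => s.2 < t), inRect p q r → r = q)).image
      (fun q => ((q.1, t) : Pt)))

/-- All points added by GREEDY while processing times `1, …, t`. -/
noncomputable def greedyUpTo (X : Finset Pt) : ℕ → Finset Pt
  | 0 => ∅
  | t + 1 => greedyUpTo X t ∪ greedyStep X (greedyUpTo X t) ((t : ℤ) + 1)

/-- The set `G` of points added by GREEDY over the whole execution on a permutation point set
`X` of size `n`. -/
noncomputable def greedyG (n : ℕ) (X : Finset Pt) : Finset Pt := greedyUpTo X n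

/-- `OP r` is the point of `X` processed at the time at which `r` was added; for `r ∈ X`,
`OP r = r`. -/
noncomputable def OP (X : Finset Pt) (r : Pt) : Pt :=
  ((X.filter (fun p => p.2 = r.2)).toList).headI

/-- The first point of `S` above `p`: the point of `S` with the same key as `p`, smaller time,
and the largest such time. -/
noncomputable def firstAbove (S : Finset Pt) (p : Pt) : Pt :=
  (p.1, (((S.filter (fun q => q.1 = p.1 ∧ q.2 < p.2)).image Prod.snd).max).unbotD 0)

/-- The pair `CP(p) = (OP(p), OP(q))` where `q` is the first point of `X ∪ G` above `p`. -/
noncomputable def CP (X G : Finset Pt) (p : Pt) : Pt × Pt :=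
  (OP X p, OP X (firstAbove (X ∪ G) p))

/-- `CP(p) ∈ MMC` (*zig*). -/
def inMMC (X G : Finset Pt) (p : Pt) : Prop :=
  ((CP X G p).1.1 < p.1 ∧ (CP X G p).2.1 < (CP X G p).1.1 ∧ (CP X G p).2.2 < (CP X G p).1.2)
  ∨ (p.1 < (CP X G p).1.1 ∧ (CP X G p).1.1 < (CP X G p).2.1 ∧ (CP X G p).2.2 < (CP X G p).1.2)

/-- `CP(p) ∈ MFC` (*zag*). -/
def inMFC (X G : Finset Pt) (p : Pt) : Prop :=
  ((CP X G p).1.1 < p.1 ∧ p.1 ≤ (CP X G p).2.1 ∧ (CP X G p).2.2 < p.2)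
  ∨ (p.1 < (CP X G p).1.1 ∧ (CP X G p).2.1 ≤ p.1 ∧ (CP X G p).2.2 < p.2)

/-- A pair is good if no point of `X` lies in the open rectangle spanned by it. -/
def IsGoodPair (X : Finset Pt) (pr : Pt × Pt) : Prop :=
  ∀ r ∈ X, ¬ inOpenRect pr.1 pr.2 r

/-- `B` is a block of `X`: the set of points of `X` whose times lie in some interval, whose
keys form a set of consecutive integers; blocks are nonempty. -/
def IsBlock (X B : Finset Pt) : Prop :=
  B.Nonempty ∧ (∃ i j : ℤ, B = X.filter (fun p => i ≤ p.2 ∧ p.2 ≤ j)) ∧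
    ∃ c d : ℤ, B.image Prod.fst = Finset.Icc c d

/-- `Top(B)`: the point of `B` with the smallest time. -/
noncomputable def TopPt (B : Finset Pt) : Pt :=
  ((B.filter (fun p => ∀ q ∈ B, p.2 ≤ q.2)).toList).headI

/-- A decomposition tree of `X`: a rooted tree whose nodes are blocks of `X`, whose root is
`X`, whose leaves are exactly the singleton blocks, and in which the children of every
internal node partition it. -/
structure DecompTree (X : Finset Pt) where
  nodes : Finset (Finset Pt)
  parent : Finset Pt → Finset Pt
  isBlock_nodes : ∀ B ∈ nodes, IsBlock X B
  root_mem : X ∈ nodes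
  parent_mem : ∀ B ∈ nodes, B ≠ X → parent B ∈ nodes
  ssubset_parent : ∀ B ∈ nodes, B ≠ X → B ⊂ parent B
  leaf_iff : ∀ B ∈ nodes, (¬ ∃ C ∈ nodes, C ≠ X ∧ parent C = B) ↔ B.card = 1
  children_partition : ∀ B ∈ nodes, B.card ≠ 1 →
    ∀ x ∈ B, ∃! C, C ∈ nodes ∧ C ≠ X ∧ parent C = B ∧ x ∈ C

/-- The children of a node `B` in a decomposition tree. -/
noncomputable def DecompTree.children {X : Finset Pt} (T : DecompTree X) (B : Finset Pt) :
    Finset (Finset Pt) :=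
  T.nodes.filter (fun C => C ≠ X ∧ T.parent C = B)

/-- `X` is `k`-decomposable: it admits a decomposition tree in which every node has at most
`k` children. -/
def kDecomposable (k : ℕ) (X : Finset Pt) : Prop :=
  ∃ T : DecompTree X, ∀ B ∈ T.nodes, (T.children B).card ≤ k

/-- `RT(p)`: the node of the decomposition tree closest to the root (i.e. containing all
others) among the nodes `B` with `Top(B) = p`. -/
noncomputable def RT {X : Finset Pt} (T : DecompTree X) (p : Pt) : Finset Pt :=
  (((T.nodes.filter (fun B => TopPt B = p)).filter
      (fun B => ∀ C ∈ T.nodes, TopPt C = p → C ⊆ B)).toList).headI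

/-- The points added by GREEDY (`G`) while processing `Top(B)` that lie to the left of
`Top(B)`. -/
noncomputable def leftSet (G B : Finset Pt) : Finset Pt :=
  G.filter (fun s => s.2 = (TopPt B).2 ∧ s.1 < (TopPt B).1)

/-- `Left(B)`: among the points added by GREEDY while processing `Top(B)` with key less than
`key (Top B)`, the one with the largest key (junk if none exists). -/
noncomputable def leftPt (G B : Finset Pt) : Pt :=
  (((leftSet G B).filter (fun s => ∀ r ∈ leftSet G B, r.1 ≤ s.1)).toList).headI

/-- The points added by GREEDY (`G`) while processing `Top(B)` that lie to the right of
`Top(B)`. -/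
noncomputable def rightSet (G B : Finset Pt) : Finset Pt :=
  G.filter (fun s => s.2 = (TopPt B).2 ∧ (TopPt B).1 < s.1)

/-- `Right(B)`: among the points added by GREEDY while processing `Top(B)` with key greater
than `key (Top B)`, the one with the smallest key (junk if none exists). -/
noncomputable def rightPt (G B : Finset Pt) : Pt :=
  (((rightSet G B).filter (fun s => ∀ r ∈ rightSet G B, s.1 ≤ r.1)).toList).headI

/-!
The rectangles spanned by the pairs `(a, b)` in `GR_⧅` are independent: no corner of one is in the
interior of another. Indeed the interior of such a rectangle contains no point of `X ∪ G`, and if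
the upper right corner of `(a, b)` were inside `(a', b')`, then GREEDY, processing `a'` between `b`
and `a`, would see past `a` and touch the key that witnesses `(a, b)`, whereas that key is touched
at the time of `b` and not again before the time of `a`.

For independent rectangles, two overlapping ones cross, the narrower one running through the wider
one from top to bottom. Hence each rectangle contains a vertical strip which no narrower rectangle
overlapping it contains. By arboral satisfaction the strip of each rectangle separates two
horizontally consecutive points of `X ∪ Y` in that rectangle, and charging the rectangle to the left
one of these is injective. The last points of the rows are never charged, and there are at least
`|X|` of them.
-/

/-- Distinct points of `X` have distinct keys and distinct times. -/
structure InGeneralPosition (X : Finset Pt) : Prop where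
  key_injOn : Set.InjOn Prod.fst (X : Set Pt)
  time_injOn : Set.InjOn Prod.snd (X : Set Pt)

/-- The points of `S` that are last in their row. -/
noncomputable def rowEnds (S : Finset Pt) : Finset Pt :=
  S.filter fun u => ∀ r ∈ S, r.2 = u.2 → r.1 ≤ u.1

theorem card_le_card_rowEnds {X S : Finset Pt} (hX : Set.InjOn Prod.snd (X : Set Pt))
    (hXS : X ⊆ S) : X.card ≤ (rowEnds S).card := by
  refine card_le_card_of_forall_subsingleton (fun x m => m.2 = x.2) (fun x hx => ?_) ?_
  on_goal 2 => exact fun m _ x ⟨hx, hmx⟩ y ⟨hy, hmy⟩ => hX hx hy (hmx.symm.trans hmy)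
  obtain ⟨m, hm, hmax⟩ := (S.filter fun r => r.2 = x.2).exists_max_image Prod.fst
    ⟨x, mem_filter.2 ⟨hXS hx, rfl⟩⟩
  obtain ⟨hmS, hmx⟩ := mem_filter.1 hm
  exact ⟨m, mem_filter.2 ⟨hmS, fun r hr h => hmax r (mem_filter.2 ⟨hr, h.trans hmx⟩)⟩, hmx⟩

/-! ### Independent rectangles -/

/-- A pair `(a, b)` viewed as the axis-parallel rectangle with lower right corner `a` and upper left
corner `b`, where times increase downwards. The order of the corners is that of the pairs `CP p`. -/
abbrev NWRect : Type := Pt × Pt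

namespace NWRect

/-- The key of the left side. -/
abbrev left (R : NWRect) : ℤ := R.2.1

/-- The key of the right side. -/
abbrev right (R : NWRect) : ℤ := R.1.1

/-- The time of the upper side, which is the smaller of the two times. -/
abbrev top (R : NWRect) : ℤ := R.2.2

/-- The time of the lower side, which is the larger of the two times. -/
abbrev bottom (R : NWRect) : ℤ := R.1.2

/-- The horizontal extent, by which overlapping rectangles are compared. -/
abbrev width (R : NWRect) : ℤ := R.right - R.left

/-- The points strictly inside the rectangle. -/
def interior (R : NWRect) : Set Pt := Set.Ioo R.left R.right ×ˢ Set.Ioo R.top R.bottom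

/-- `R` is nondegenerate and the two corners that determine it belong to `X`. -/
structure IsSpannedBy (R : NWRect) (X : Finset Pt) : Prop where
  fst_mem : R.1 ∈ X
  snd_mem : R.2 ∈ X
  left_lt_right : R.left < R.right
  top_lt_bottom : R.top < R.bottom

/-- No corner of `R` lies in the interior of `R'`. -/
structure CornersAvoid (R R' : NWRect) : Prop where
  upperLeft : R.2 ∉ R'.interior
  upperRight : ((R.right, R.top) : Pt) ∉ R'.interior
  lowerLeft : ((R.left, R.bottom) : Pt) ∉ R'.interior
  lowerRight : R.1 ∉ R'.interior

/-- The interiors of two nondegenerate rectangles intersect. -/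
structure Overlaps (R R' : NWRect) : Prop where
  left_lt_right : R.left < R'.right
  left_lt_right' : R'.left < R.right
  top_lt_bottom : R.top < R'.bottom
  top_lt_bottom' : R'.top < R.bottom

/-- `R'` runs through `R` from top to bottom. -/
structure Crosses (R' R : NWRect) : Prop where
  left_le : R.left ≤ R'.left
  le_right : R'.right ≤ R.right
  top_le : R'.top ≤ R.top
  le_bottom : R.bottom ≤ R'.bottom

variable {X S : Finset Pt} {I : Finset NWRect} {R R' M : NWRect}

theorem IsSpannedBy.mono (hR : R.IsSpannedBy X) (hXS : X ⊆ S) : R.IsSpannedBy S :=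
  { hR with fst_mem := hXS hR.fst_mem, snd_mem := hXS hR.snd_mem }

theorem Overlaps.symm (h : R.Overlaps R') : R'.Overlaps R :=
  ⟨h.left_lt_right', h.left_lt_right, h.top_lt_bottom', h.top_lt_bottom⟩

theorem IsSpannedBy.left_eq_left_iff (hX : InGeneralPosition X) (hR : R.IsSpannedBy X)
    (hR' : R'.IsSpannedBy X) : R.left = R'.left ↔ R.top = R'.top :=
  ⟨fun h => congrArg Prod.snd (hX.key_injOn hR.snd_mem hR'.snd_mem h),
    fun h => congrArg Prod.fst (hX.time_injOn hR.snd_mem hR'.snd_mem h)⟩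

theorem IsSpannedBy.right_eq_right_iff (hX : InGeneralPosition X) (hR : R.IsSpannedBy X)
    (hR' : R'.IsSpannedBy X) : R.right = R'.right ↔ R.bottom = R'.bottom :=
  ⟨fun h => congrArg Prod.snd (hX.key_injOn hR.fst_mem hR'.fst_mem h),
    fun h => congrArg Prod.fst (hX.time_injOn hR.fst_mem hR'.fst_mem h)⟩

theorem IsSpannedBy.left_eq_right_iff (hX : InGeneralPosition X) (hR : R.IsSpannedBy X)
    (hR' : R'.IsSpannedBy X) : R.left = R'.right ↔ R.top = R'.bottom :=
  ⟨fun h => congrArg Prod.snd (hX.key_injOn hR.snd_mem hR'.fst_mem h),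
    fun h => congrArg Prod.fst (hX.time_injOn hR.snd_mem hR'.fst_mem h)⟩

theorem IsSpannedBy.ext (hX : InGeneralPosition X) (hR : R.IsSpannedBy X)
    (hR' : R'.IsSpannedBy X) (hleft : R.left = R'.left) (hright : R.right = R'.right) : R = R' :=
  Prod.ext (hX.key_injOn hR.fst_mem hR'.fst_mem hright)
    (hX.key_injOn hR.snd_mem hR'.snd_mem hleft)

/-- A family of rectangles spanned by `X` such that no corner of one of them is in the interior of
another one. -/
structure IsIndependent (X : Finset Pt) (I : Finset NWRect) : Prop where
  isSpannedBy : ∀ R ∈ I, R.IsSpannedBy X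
  cornersAvoid : ∀ R ∈ I, ∀ R' ∈ I, R.CornersAvoid R'

theorem IsIndependent.crosses (hI : IsIndependent X I) (hX : InGeneralPosition X) (hR : R ∈ I)
    (hR' : R' ∈ I) (ho : R.Overlaps R') (hw : R'.width ≤ R.width) : R'.Crosses R := by
  have hleft_iff := (hI.isSpannedBy R hR).left_eq_left_iff hX (hI.isSpannedBy R' hR')
  have hright_iff := (hI.isSpannedBy R hR).right_eq_right_iff hX (hI.isSpannedBy R' hR')
  have hc := hI.cornersAvoid R hR R' hR'
  have hc' := hI.cornersAvoid R' hR' R hR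
  obtain ⟨hlr, hlr', htb, htb'⟩ := ho
  unfold width at hw
  have hleft : R.left ≤ R'.left := by
    by_contra! h
    have htop : R'.top ≤ R.top := by
      by_contra! ht
      have hr : R'.right < R.right := by omega
      exact hc'.upperRight ⟨⟨hlr, hr⟩, ht, htb'⟩
    have htop' : R.top ≤ R'.top := by
      by_contra! ht
      exact hc.upperLeft ⟨⟨h, hlr⟩, ht, htb⟩
    omega
  have hright : R'.right ≤ R.right := by
    by_contra! h
    have hbottom : R.bottom ≤ R'.bottom := by
      by_contra! hb
      have hl : R.left < R'.left := by omega
      exact hc'.lowerLeft ⟨⟨hl, hlr'⟩, htb, hb⟩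
    have hbottom' : R'.bottom ≤ R.bottom := by
      by_contra! hb
      exact hc.lowerRight ⟨⟨hlr', h⟩, htb', hb⟩
    omega
  refine ⟨hleft, hright, ?_, ?_⟩
  · by_contra! ht
    have hl : R.left < R'.left := by omega
    exact hc'.upperLeft ⟨⟨hl, hlr'⟩, ht, htb'⟩
  · by_contra! hb
    have hr : R'.right < R.right := by omega
    exact hc'.lowerRight ⟨⟨hlr, hr⟩, htb, hb⟩

theorem IsIndependent.left_le_of_crosses_of_right_mem (hI : IsIndependent X I)
    (hX : InGeneralPosition X) (hR : R.top < R.bottom) (hM : M ∈ I) (hR' : R' ∈ I)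
    (hMR : M.Crosses R) (hR'R : R'.Crosses R) (hmem : M.right ∈ Set.Ico R'.left R'.right) :
    R'.left ≤ M.left := by
  have hspM := hI.isSpannedBy M hM
  have hmeet := ((hI.isSpannedBy R' hR').left_eq_right_iff hX hspM).1
  obtain ⟨-, -, hMtop, hMbottom⟩ := hMR
  obtain ⟨-, -, htop, hbottom⟩ := hR'R
  have hlt : R'.left < M.right := lt_of_le_of_ne hmem.1 fun h => by
    have := hmeet h
    omega
  have ho : M.Overlaps R' :=
    ⟨hspM.left_lt_right.trans hmem.2, hlt, by omega, by omega⟩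
  rcases le_total R'.width M.width with hw | hw
  · exact absurd (hI.crosses hX hM hR' ho hw).le_right (not_le.2 hmem.2)
  · exact (hI.crosses hX hR' hM ho.symm hw).left_le

/-- The vertical strip between the keys `l` and `l + 1` avoids all other rectangles of `I` that
overlap `R` and are at most as wide as `R`. -/
def IsFreeStrip (I : Finset NWRect) (R : NWRect) (l : ℤ) : Prop :=
  ∀ R' ∈ I, R' ≠ R → R.Overlaps R' → R'.width ≤ R.width → l ∉ Set.Ico R'.left R'.right

theorem IsIndependent.exists_isFreeStrip (hI : IsIndependent X I) (hX : InGeneralPosition X)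
    (hR : R ∈ I) : ∃ l ∈ Set.Ico R.left R.right, IsFreeStrip I R l := by
  have hsp := hI.isSpannedBy R hR
  by_cases hfree : IsFreeStrip I R R.left
  · exact ⟨R.left, ⟨le_rfl, hsp.left_lt_right⟩, hfree⟩
  -- Otherwise start the strip where the widest narrower rectangle sharing its left side ends.
  let B := I.filter fun M => M ≠ R ∧ M.Crosses R ∧ M.left = R.left
  have mem_B : ∀ M ∈ I, M ≠ R → M.Crosses R → M.left ≤ R.left → M ∈ B := fun M hM hne hc hle =>
    mem_filter.2 ⟨hM, hne, hc, hle.antisymm hc.left_le⟩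
  have hB : B.Nonempty := by
    simp only [IsFreeStrip, not_forall, not_not] at hfree
    obtain ⟨M, hM, hne, ho, hw, hmem⟩ := hfree
    exact ⟨M, mem_B M hM hne (hI.crosses hX hR hM ho hw) hmem.1⟩
  obtain ⟨M, hMB, hmax⟩ := B.exists_max_image right hB
  obtain ⟨hM, hMne, hMR, hMleft⟩ := mem_filter.1 hMB
  have hspM := hI.isSpannedBy M hM
  have hright : M.right ≠ R.right := fun h => hMne (hspM.ext hX hsp hMleft h)
  refine ⟨M.right, ⟨hMleft ▸ hspM.left_lt_right.le, hMR.le_right.lt_of_ne hright⟩, ?_⟩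
  intro R' hR' hne ho hw hmem
  have hc := hI.crosses hX hR hR' ho hw
  have hle := hI.left_le_of_crosses_of_right_mem hX hsp.top_lt_bottom hM hR' hMR hc hmem
  exact (hmax R' (mem_B R' hR' hne hc (hMleft ▸ hle))).not_gt hmem.2

/-- `u` and `v` are consecutive points of a row of `S` inside the closed rectangle `R`, separated by
the vertical strip between the keys `l` and `l + 1`. -/
structure IsStripPair (S : Finset Pt) (R : NWRect) (l : ℤ) (u v : Pt) : Prop where
  fst_mem : u ∈ S
  snd_mem : v ∈ S
  time_eq : u.2 = v.2
  left_le : R.left ≤ u.1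
  le_strip : u.1 ≤ l
  strip_lt : l < v.1
  le_right : v.1 ≤ R.right
  top_le : R.top ≤ u.2
  le_bottom : u.2 ≤ R.bottom
  next_le : ∀ r ∈ S, r.2 = u.2 → u.1 < r.1 → v.1 ≤ r.1

theorem IsSpannedBy.exists_isStripPair (hR : R.IsSpannedBy S) (hS : ArbSat S) {l : ℤ}
    (hl : l ∈ Set.Ico R.left R.right) : ∃ u v, IsStripPair S R l u v := by
  let C := (S ×ˢ S).filter fun w => (R.left ≤ w.1.1 ∧ w.1.1 ≤ l) ∧ (l < w.2.1 ∧ w.2.1 ≤ R.right) ∧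
    R.top ≤ w.1.2 ∧ w.1.2 ≤ w.2.2 ∧ w.2.2 ≤ R.bottom
  have mem_C : ∀ u v : Pt, (u, v) ∈ C ↔ (u ∈ S ∧ v ∈ S) ∧ (R.left ≤ u.1 ∧ u.1 ≤ l) ∧
      (l < v.1 ∧ v.1 ≤ R.right) ∧ R.top ≤ u.2 ∧ u.2 ≤ v.2 ∧ v.2 ≤ R.bottom := fun u v => by
    rw [mem_filter, mem_product]
  have hC : C.Nonempty := ⟨(R.2, R.1), (mem_C _ _).2
    ⟨⟨hR.snd_mem, hR.fst_mem⟩, ⟨le_rfl, hl.1⟩, ⟨hl.2, le_rfl⟩, le_rfl, hR.top_lt_bottom.le, le_rfl⟩⟩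
  obtain ⟨⟨u, v⟩, huv, hmin⟩ :=
    C.exists_min_image (fun w => (w.2.1 - w.1.1) + (w.2.2 - w.1.2)) hC
  obtain ⟨⟨hu, hv⟩, hul, hlv, hut, htt, hvt⟩ := (mem_C u v).1 huv
  have hempty : ∀ r ∈ S, u.1 ≤ r.1 → r.1 ≤ v.1 → u.2 ≤ r.2 → r.2 ≤ v.2 → r = u ∨ r = v := by
    intro r hr hur hrv hur' hrv'
    rcases le_or_gt r.1 l with h | h
    · have := hmin (r, v) ((mem_C r v).2 ⟨⟨hr, hv⟩, by omega⟩)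
      dsimp only at this
      exact Or.inl (Prod.ext (by omega) (by omega))
    · have := hmin (u, r) ((mem_C u r).2 ⟨⟨hu, hr⟩, by omega⟩)
      dsimp only at this
      exact Or.inr (Prod.ext (by omega) (by omega))
  have hrow : u.2 = v.2 := by
    rcases hS u hu v hv with h | h | ⟨r, hr, hru, hrv, hrect⟩
    · omega
    · exact h
    · unfold inRect at hrect
      exact absurd (hempty r hr (by omega) (by omega) (by omega) (by omega)) (by tauto)
  refine ⟨u, v, hu, hv, hrow, hul.1, hul.2, hlv.1, hlv.2, hut, htt.trans hvt, ?_⟩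
  intro r hr hrow' hlt
  by_contra! hrv
  rcases hempty r hr hlt.le hrv.le hrow'.ge (hrow'.trans hrow).le with rfl | rfl <;> omega

theorem IsStripPair.eq_of_isFreeStrip (hX : InGeneralPosition X) (hI : IsIndependent X I)
    (hR : R ∈ I) (hR' : R' ∈ I) {l l' : ℤ} {u v v' : Pt} (hl : IsFreeStrip I R l)
    (h : IsStripPair S R l u v) (h' : IsStripPair S R' l' u v') (hw : R'.width ≤ R.width) :
    R' = R := by
  have hsp := hI.isSpannedBy R hR
  have hsp' := hI.isSpannedBy R' hR'
  have htop := (hsp.left_eq_right_iff hX hsp').2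
  have htop' := (hsp'.left_eq_right_iff hX hsp).2
  have hvv' := h.next_le v' h'.snd_mem h'.time_eq.symm (h'.le_strip.trans_lt h'.strip_lt)
  obtain ⟨-, -, -, hu, hul, hlv, hv, ht, hb, -⟩ := h
  obtain ⟨-, -, -, hu', -, -, hv', ht', hb', -⟩ := h'
  have ho : R.Overlaps R' := ⟨by omega, by omega, by omega, by omega⟩
  by_contra hne
  exact hl R' hR' hne ho hw ⟨by omega, by omega⟩

theorem IsStripPair.notMem_rowEnds {l : ℤ} {u v : Pt} (h : IsStripPair S R l u v) :
    u ∉ rowEnds S := fun hu =>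
  ((mem_filter.1 hu).2 v h.snd_mem h.time_eq.symm).not_gt (h.le_strip.trans_lt h.strip_lt)

theorem IsIndependent.card_le_card_sdiff_rowEnds (hI : IsIndependent X I)
    (hX : InGeneralPosition X) (hXS : X ⊆ S) (hS : ArbSat S) :
    I.card ≤ (S \ rowEnds S).card := by
  have hcharge : ∀ R ∈ I, ∃ l u v, IsFreeStrip I R l ∧ IsStripPair S R l u v := fun R hR => by
    obtain ⟨l, hl, hfree⟩ := hI.exists_isFreeStrip hX hR
    obtain ⟨u, v, huv⟩ := ((hI.isSpannedBy R hR).mono hXS).exists_isStripPair hS hl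
    exact ⟨l, u, v, hfree, huv⟩
  choose! l u v hfree huv using hcharge
  refine card_le_card_of_injOn u
    (fun R hR => mem_sdiff.2 ⟨(huv R hR).fst_mem, (huv R hR).notMem_rowEnds⟩) ?_
  intro R hR R' hR' h
  rcases le_total R'.width R.width with hw | hw
  · exact ((huv R hR).eq_of_isFreeStrip hX hI hR hR' (hfree R hR) (h ▸ huv R' hR') hw).symm
  · exact (huv R' hR').eq_of_isFreeStrip hX hI hR' hR (hfree R' hR') (h ▸ huv R hR) hw

theorem IsIndependent.card_add_card_le (hI : IsIndependent X I) (hX : InGeneralPosition X)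
    (hXS : X ⊆ S) (hS : ArbSat S) : I.card + X.card ≤ S.card :=
  calc I.card + X.card ≤ (S \ rowEnds S).card + (rowEnds S).card :=
        add_le_add (hI.card_le_card_sdiff_rowEnds hX hXS hS)
          (card_le_card_rowEnds hX.time_injOn hXS)
    _ = S.card := card_sdiff_add_card_eq_card (filter_subset _ _)

end NWRect

/-! ### The points added by GREEDY -/

/-- GREEDY, processing `s` with the point set `S`, sees `q`: the point `q` is earlier than `s`, has
a different key, and is the only earlier point in the rectangle spanned by `s` and `q`. -/
structure Sees (S : Finset Pt) (s q : Pt) : Prop where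
  mem : q ∈ S
  time_lt : q.2 < s.2
  key_ne : q.1 ≠ s.1
  eq_of_inRect : ∀ w ∈ S, w.2 < s.2 → inRect s q w → w = q

theorem sees_congr {S S' : Finset Pt} {s q : Pt}
    (h : ∀ w : Pt, w.2 < s.2 → (w ∈ S ↔ w ∈ S')) : Sees S s q ↔ Sees S' s q :=
  ⟨fun ⟨hq, ht, hk, he⟩ => ⟨(h q ht).1 hq, ht, hk, fun w hw hwt => he w ((h w hwt).2 hw) hwt⟩,
    fun ⟨hq, ht, hk, he⟩ => ⟨(h q ht).2 hq, ht, hk, fun w hw hwt => he w ((h w hwt).1 hw) hwt⟩⟩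

theorem mem_greedyStep {X G : Finset Pt} {t : ℤ} {r : Pt} :
    r ∈ greedyStep X G t ↔
      r.2 = t ∧ ∃ s ∈ X, s.2 = r.2 ∧ ∃ q, q.1 = r.1 ∧ Sees (X ∪ G) s q := by
  simp only [greedyStep, mem_biUnion, mem_image, mem_filter]
  constructor
  · rintro ⟨s, ⟨hs, rfl⟩, q, ⟨⟨hq, hqt⟩, hne, hemp⟩, rfl⟩
    exact ⟨rfl, s, hs, rfl, q, rfl, hq, hqt, hne, fun w hw hwt => hemp w ⟨hw, hwt⟩⟩
  · rintro ⟨rfl, s, hs, hst, q, hqr, hq, hqt, hne, hemp⟩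
    rw [← hst]
    exact ⟨s, ⟨hs, rfl⟩, q, ⟨⟨hq, hqt⟩, hne, fun w hw => hemp w hw.1 hw.2⟩, Prod.ext hqr hst⟩

theorem mem_greedyUpTo {X : Finset Pt} {m : ℕ} {r : Pt} :
    r ∈ greedyUpTo X m ↔ ∃ i < m, r ∈ greedyStep X (greedyUpTo X i) ((i : ℤ) + 1) := by
  induction m with
  | zero => simp [greedyUpTo]
  | succ m ih => simp only [greedyUpTo, mem_union, ih, Nat.lt_succ_iff_lt_or_eq, or_and_right,
      exists_or, exists_eq_left]

theorem mem_greedyUpTo_iff_of_le {X : Finset Pt} {i m : ℕ} (him : i ≤ m) {r : Pt}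
    (hr : r.2 ≤ i) : r ∈ greedyUpTo X i ↔ r ∈ greedyUpTo X m := by
  simp only [mem_greedyUpTo]
  refine exists_congr fun j => and_congr_left fun h => ?_
  have := (mem_greedyStep.1 h).1
  omega

/-- Replacing the intermediate point sets of the execution by the final one is harmless, because
visibility only depends on the points that are earlier than the one being processed. -/
theorem mem_greedyG {n : ℕ} {X : Finset Pt} {r : Pt} :
    r ∈ greedyG n X ↔ r.2 ∈ Set.Icc 1 (n : ℤ) ∧
      ∃ s ∈ X, s.2 = r.2 ∧ ∃ q, q.1 = r.1 ∧ Sees (X ∪ greedyG n X) s q := by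
  have hsees : ∀ i < n, ∀ s q : Pt, s.2 = (i : ℤ) + 1 →
      (Sees (X ∪ greedyUpTo X i) s q ↔ Sees (X ∪ greedyG n X) s q) :=
    fun i hi s q hs => sees_congr fun w hw => by
      rw [mem_union, mem_union, greedyG, mem_greedyUpTo_iff_of_le hi.le (by omega)]
  rw [greedyG, mem_greedyUpTo]
  constructor
  · rintro ⟨i, hi, h⟩
    obtain ⟨ht, s, hs, hst, q, hqr, hq⟩ := mem_greedyStep.1 h
    exact ⟨⟨by omega, by omega⟩, s, hs, hst, q, hqr, (hsees i hi s q (hst.trans ht)).1 hq⟩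
  · rintro ⟨⟨h1, hn⟩, s, hs, hst, q, hqr, hq⟩
    obtain ⟨i, hi⟩ := Int.eq_ofNat_of_zero_le (sub_nonneg.2 h1)
    refine ⟨i, by omega, mem_greedyStep.2 ⟨by omega, s, hs, hst, q, hqr, ?_⟩⟩
    exact (hsees i (by omega) s q (by omega)).2 hq

theorem exists_time_eq_of_mem_union_greedyG {n : ℕ} {X : Finset Pt} {r : Pt}
    (hr : r ∈ X ∪ greedyG n X) : ∃ x ∈ X, x.2 = r.2 := by
  rcases mem_union.1 hr with h | h
  · exact ⟨r, h, rfl⟩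
  · obtain ⟨-, s, hs, hst, -⟩ := mem_greedyG.1 h
    exact ⟨s, hs, hst⟩

theorem OP_eq {X : Finset Pt} (hX : Set.InjOn Prod.snd (X : Set Pt)) {r x : Pt} (hx : x ∈ X)
    (h : x.2 = r.2) : OP X r = x := by
  have : X.filter (fun p => p.2 = r.2) = {x} := by
    ext y
    simp only [mem_filter, mem_singleton]
    exact ⟨fun ⟨hy, hyr⟩ => hX hy hx (hyr.trans h.symm), fun hy => hy ▸ ⟨hx, h⟩⟩
  rw [OP, this, toList_singleton, List.headI]

theorem firstAbove_eq_of_forall_le {S : Finset Pt} {p q : Pt} (hq : q ∈ S)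
    (hk : q.1 = p.1) (ht : q.2 < p.2)
    (hlast : ∀ r ∈ S, r.1 = p.1 → r.2 < p.2 → r.2 ≤ q.2) : firstAbove S p = q := by
  have hmax : ((S.filter fun r => r.1 = p.1 ∧ r.2 < p.2).image Prod.snd).max = (q.2 : WithBot ℤ) :=
    le_antisymm
      (Finset.max_le <| forall_mem_image.2 fun r hr =>
        have ⟨hrS, hrk, hrt⟩ := mem_filter.1 hr
        WithBot.coe_le_coe.2 (hlast r hrS hrk hrt))
      (le_max (mem_image_of_mem _ (mem_filter.2 ⟨hq, hk, ht⟩)))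
  rw [firstAbove, hmax, WithBot.unbotD_coe, ← hk]

theorem Sees.firstAbove_eq {S : Finset Pt} {s q p : Pt} (hq : Sees S s q)
    (hk : q.1 = p.1) (hs : s.2 = p.2) : firstAbove S p = q := by
  have ht := hq.time_lt
  refine firstAbove_eq_of_forall_le hq.mem hk (hs ▸ ht) fun r hr hrk hrt => ?_
  by_contra! h
  have hrect : inRect s q r := by
    unfold inRect
    omega
  exact h.ne (congrArg Prod.snd (hq.eq_of_inRect r hr (hs ▸ hrt) hrect)).symm

theorem exists_CP_eq {n : ℕ} {X : Finset Pt} (hX : Set.InjOn Prod.snd (X : Set Pt)) {p : Pt}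
    (hp : p ∈ greedyG n X) : ∃ a ∈ X, ∃ b ∈ X, CP X (greedyG n X) p = (a, b) ∧ a.2 = p.2 ∧
      Sees (X ∪ greedyG n X) a (p.1, b.2) := by
  obtain ⟨-, a, ha, hap, q, hqp, hq⟩ := mem_greedyG.1 hp
  obtain ⟨b, hb, hbq⟩ := exists_time_eq_of_mem_union_greedyG hq.mem
  refine ⟨a, ha, b, hb, ?_, hap, hqp ▸ hbq ▸ hq⟩
  rw [CP, hq.firstAbove_eq hqp hap, OP_eq hX ha hap, OP_eq hX hb hbq]

/-! ### Good zag pairs are independent -/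

theorem IsGoodPair.notMem_interior {X : Finset Pt} {R : NWRect} (hR : IsGoodPair X R) {r : Pt}
    (hr : r ∈ X) : r ∉ R.interior := by
  rintro ⟨⟨hl, hr'⟩, ht, hb⟩
  exact hR r hr
    ⟨min_lt_of_right_lt hl, lt_max_of_lt_left hr', min_lt_of_right_lt ht, lt_max_of_lt_left hb⟩

/-- `R = (a, b)` is a good pair with `b` to the upper left of `a`, witnessed by the key `k`: GREEDY
touches `k` when processing `b`, and next when processing `a`. -/
structure IsGoodZag (n : ℕ) (X : Finset Pt) (R : NWRect) (k : ℤ) : Prop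
    extends R.IsSpannedBy X where
  isGoodPair : IsGoodPair X R
  lt_right : k < R.right
  touch : ((k, R.bottom) : Pt) ∈ greedyG n X
  sees : Sees (X ∪ greedyG n X) R.1 (k, R.top)

section IsGoodZag

variable {n : ℕ} {X : Finset Pt} {R R' : NWRect} {k k' : ℤ}

theorem exists_isGoodZag_CP (hX : Set.InjOn Prod.snd (X : Set Pt)) {p : Pt}
    (hp : p ∈ greedyG n X) (hmfc : inMFC X (greedyG n X) p)
    (hgood : IsGoodPair X (CP X (greedyG n X) p))
    (hlt : (CP X (greedyG n X) p).2.1 < (CP X (greedyG n X) p).1.1) :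
    ∃ k, IsGoodZag n X (CP X (greedyG n X) p) k := by
  obtain ⟨a, ha, b, hb, hCP, hap, hsees⟩ := exists_CP_eq hX hp
  unfold inMFC at hmfc
  rw [hCP] at hmfc hgood hlt ⊢
  have hpa : p.1 < a.1 := by
    dsimp only at hmfc hlt
    omega
  have htouch : ((p.1, a.2) : Pt) ∈ greedyG n X := hap ▸ hp
  exact ⟨p.1, ⟨ha, hb, hlt, hsees.time_lt⟩, hgood, hpa, htouch, hsees⟩

theorem IsGoodZag.eq_of_mem (hR : IsGoodZag n X R k) {r : Pt} (hr : r ∈ X ∪ greedyG n X)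
    (hk : k ≤ r.1) (hright : r.1 ≤ R.right) (htop : R.top ≤ r.2) (hbottom : r.2 < R.bottom) :
    r = (k, R.top) :=
  hR.sees.eq_of_inRect r hr hbottom ⟨min_le_of_right_le hk, le_max_of_le_left hright,
    min_le_of_right_le htop, le_max_of_le_left hbottom.le⟩

theorem IsGoodZag.notMem_of_lt_key (hR : IsGoodZag n X R k) {r : Pt}
    (hleft : R.left < r.1) (hk : r.1 < k) (htop : R.top < r.2) (hbottom : r.2 < R.bottom) :
    r ∉ X ∪ greedyG n X := by
  intro hr
  let W := (X ∪ greedyG n X).filter fun r =>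
    (R.left < r.1 ∧ r.1 < k) ∧ R.top < r.2 ∧ r.2 < R.bottom
  obtain ⟨w, hwW, hmin⟩ := W.exists_min_image Prod.snd
    ⟨r, mem_filter.2 ⟨hr, ⟨hleft, hk⟩, htop, hbottom⟩⟩
  obtain ⟨hw, ⟨hwl, hwk⟩, hwt, hwb⟩ := mem_filter.1 hwW
  have hlt := hR.lt_right
  rcases mem_union.1 hw with hwX | hwG
  · exact hR.isGoodPair.notMem_interior hwX ⟨⟨hwl, hwk.trans hlt⟩, hwt, hwb⟩
  obtain ⟨-, s, hs, hsw, q, hqw, hq⟩ := mem_greedyG.1 hwG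
  have hqs := hq.time_lt
  have htops : R.top < s.2 := hsw ▸ hwt
  have hsbottom : s.2 < R.bottom := hsw ▸ hwb
  have hleftq : R.left < q.1 := hqw ▸ hwl
  have hqk : q.1 < k := hqw ▸ hwk
  have hqtop : q.2 ≤ R.top := by
    by_contra! h
    have hqW : q ∈ W := mem_filter.2 ⟨hq.mem, ⟨hleftq, hqk⟩, h, hqs.trans hsbottom⟩
    exact (hmin q hqW).not_gt (hsw ▸ hqs)
  -- As `s` is not inside `R`, one of the points `R.2` and `(k, R.top)` hides `q` from `s`.
  rcases le_or_gt s.1 R.left with hsl | hsl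
  · have hRq : R.2 = q := hq.eq_of_inRect _ (mem_union_left _ hR.snd_mem) htops
      ⟨min_le_of_left_le hsl, le_max_of_le_right hleftq.le,
        min_le_of_right_le hqtop, le_max_of_le_left htops.le⟩
    exact hleftq.ne (congrArg Prod.fst hRq)
  · have hsr : R.right ≤ s.1 := by
      by_contra! h
      exact hR.isGoodPair.notMem_interior hs ⟨⟨hsl, h⟩, htops, hsbottom⟩
    have hkq : (k, R.top) = q := hq.eq_of_inRect _ hR.sees.mem htops
      ⟨min_le_of_right_le hqk.le, le_max_of_le_left (hlt.le.trans hsr),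
        min_le_of_right_le hqtop, le_max_of_le_left htops.le⟩
    exact hqk.ne' (congrArg Prod.fst hkq)

theorem IsGoodZag.notMem_of_le_right (hR : IsGoodZag n X R k) {r : Pt}
    (hleft : R.left < r.1) (hright : r.1 ≤ R.right) (htop : R.top < r.2)
    (hbottom : r.2 < R.bottom) : r ∉ X ∪ greedyG n X := by
  rcases lt_or_ge r.1 k with hk | hk
  · exact hR.notMem_of_lt_key hleft hk htop hbottom
  · intro hr
    have hrk : r = (k, R.top) := hR.eq_of_mem hr hk hright htop.le hbottom
    exact htop.ne' (Prod.ext_iff.1 hrk).2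

theorem IsGoodZag.upperRight_notMem_interior (hX : InGeneralPosition X)
    (hR : IsGoodZag n X R k) (hR' : IsGoodZag n X R' k') :
    ((R.right, R.top) : Pt) ∉ R'.interior := by
  rintro ⟨⟨hl, hr⟩, ht, hb⟩
  have hkr := hR.lt_right
  have hbottom : R'.bottom < R.bottom := by
    by_contra! h
    have hne : R.bottom ≠ R'.bottom := fun h =>
      hr.ne ((hR.right_eq_right_iff hX hR'.toIsSpannedBy).2 h)
    exact hR'.isGoodPair.notMem_interior hR.fst_mem
      ⟨⟨hl, hr⟩, ht.trans hR.top_lt_bottom, h.lt_of_ne hne⟩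
  have hsees : Sees (X ∪ greedyG n X) R'.1 (k, R.top) := by
    refine ⟨hR.sees.mem, hb, (hkr.trans hr).ne, fun w hw hwb ⟨hkw, hwr, htw, _⟩ => ?_⟩
    rw [min_eq_right (hkr.trans hr).le] at hkw
    rw [max_eq_left (hkr.trans hr).le] at hwr
    rw [min_eq_right hb.le] at htw
    rcases le_or_gt w.1 R.right with h | h
    · exact hR.eq_of_mem hw hkw h htw (hwb.trans hbottom)
    · exact absurd hw (hR'.notMem_of_le_right (hl.trans h) hwr (ht.trans_le htw) hwb)
  have htouch : ((k, R'.bottom) : Pt) ∈ greedyG n X :=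
    mem_greedyG.2 ⟨(mem_greedyG.1 hR'.touch).1, R'.1, hR'.fst_mem, rfl, (k, R.top), rfl, hsees⟩
  have heq : ((k, R'.bottom) : Pt) = (k, R.top) :=
    hR.eq_of_mem (mem_union_right _ htouch) le_rfl hkr.le hb.le hbottom
  exact hb.ne' (Prod.ext_iff.1 heq).2

theorem IsGoodZag.lowerLeft_notMem_interior (hX : InGeneralPosition X)
    (hR : IsGoodZag n X R k) (hR' : IsGoodZag n X R' k') :
    ((R.left, R.bottom) : Pt) ∉ R'.interior := by
  rintro ⟨⟨hl, hr⟩, ht, hb⟩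
  have hright : R'.right < R.right := by
    by_contra! h
    have hne : R.right ≠ R'.right := fun h =>
      hb.ne ((hR.right_eq_right_iff hX hR'.toIsSpannedBy).1 h)
    exact hR'.isGoodPair.notMem_interior hR.fst_mem
      ⟨⟨hl.trans hR.left_lt_right, h.lt_of_ne hne⟩, ht, hb⟩
  have htop : R.top < R'.top := by
    by_contra! h
    have hne : R'.top ≠ R.top := fun h =>
      hl.ne ((hR'.left_eq_left_iff hX hR.toIsSpannedBy).2 h)
    exact hR'.isGoodPair.notMem_interior hR.snd_mem
      ⟨⟨hl, hr⟩, h.lt_of_ne hne, hR.top_lt_bottom.trans hb⟩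
  exact hR'.upperRight_notMem_interior hX hR ⟨⟨hr, hright⟩, htop, ht⟩

theorem IsGoodZag.cornersAvoid (hX : InGeneralPosition X) (hR : IsGoodZag n X R k)
    (hR' : IsGoodZag n X R' k') : R.CornersAvoid R' where
  upperLeft := hR'.isGoodPair.notMem_interior hR.snd_mem
  upperRight := hR.upperRight_notMem_interior hX hR'
  lowerLeft := hR.lowerLeft_notMem_interior hX hR'
  lowerRight := hR'.isGoodPair.notMem_interior hR.fst_mem

end IsGoodZag

/-- The set `GR_⧅` of the good pairs `CP p = (a, b)` in `MFC` with `b` to the left of `a`. -/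
noncomputable def goodPairsNW (n : ℕ) (X : Finset Pt) : Finset NWRect :=
  ((greedyG n X).filter fun p => inMFC X (greedyG n X) p ∧
    IsGoodPair X (CP X (greedyG n X) p) ∧
    (CP X (greedyG n X) p).2.1 < (CP X (greedyG n X) p).1.1).image (CP X (greedyG n X))

theorem isIndependent_goodPairsNW {n : ℕ} {X : Finset Pt} (hX : InGeneralPosition X) :
    NWRect.IsIndependent X (goodPairsNW n X) := by
  have hzag : ∀ R ∈ goodPairsNW n X, ∃ k, IsGoodZag n X R k :=
    forall_mem_image.2 fun p hp =>
      have ⟨hpG, hmfc, hgood, hlt⟩ := mem_filter.1 hp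
      exists_isGoodZag_CP hX.time_injOn hpG hmfc hgood hlt
  choose! k hk using hzag
  exact ⟨fun R hR => (hk R hR).toIsSpannedBy,
    fun R hR R' hR' => (hk R hR).cornersAvoid hX (hk R' hR')⟩

theorem good_pairs_nw_lower_bound_general (n : ℕ) {X : Finset Pt} (hX : InGeneralPosition X)
    {Y : Finset Pt} (hsat : ArbSat (X ∪ Y)) :
    (goodPairsNW n X).card + X.card ≤ (X ∪ Y).card :=
  (isIndependent_goodPairsNW hX).card_add_card_le hX subset_union_left hsat

theorem IsPermPointSet.inGeneralPosition {n : ℕ} {X : Finset Pt} (hX : IsPermPointSet n X) :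
    InGeneralPosition X := by
  obtain ⟨σ, rfl⟩ := hX
  constructor <;> intro x hx y hy h <;>
    obtain ⟨i, -, rfl⟩ := mem_image.1 hx <;> obtain ⟨j, -, rfl⟩ := mem_image.1 hy <;>
    dsimp only at h
  · rw [σ.injective (Fin.ext (by omega) : σ i = σ j)]
  · rw [(Fin.ext (by omega) : i = j)]

/-- Let `GR_⧅` be the set of pairs `CP(p)`, `p ∈ G`, that are good pairs
`(a, b)` of `MFC` with `key(b) < key(a)`. For every point set `Y` such that `X ∪ Y` is
arborally satisfied, `|X ∪ Y| ≥ |GR_⧅| + |X|`. -/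
theorem good_pairs_nw_lower_bound (n : ℕ) (X : Finset Pt) (hX : IsPermPointSet n X)
    (Y : Finset Pt) (hsat : ArbSat (X ∪ Y)) :
    (((greedyG n X).filter (fun p => inMFC X (greedyG n X) p ∧
        IsGoodPair X (CP X (greedyG n X) p) ∧
        (CP X (greedyG n X) p).2.1 < (CP X (greedyG n X) p).1.1)).image
      (CP X (greedyG n X))).card + X.card ≤ (X ∪ Y).card :=
  good_pairs_nw_lower_bound_general n hX.inGeneralPosition hsat
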